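/- arXiv:1507.05581 — 14 statements merged into one kernel-verified Lean document; each statement's English description precedes it below -/
import Mathlib

section
/- Composition lemma for sorted list segments (instance of the theorem that syntactically compositional predicates are semantically compositional): for all list heaps h₁, h₂ with disjoint domains, locations E₁, E₂, E₃ and multisets of integers M₁, M₂, M₃, if lseg(h₁, E₁, M₁, E₂, M₂) and lseg(h₂, E₂, M₂, E₃, M₃) hold, then lseg(h₁ ∗ h₂, E₁, M₁, E₃, M₃) holds. -/
/-- Locations are natural numbers; `0` plays the role of nil. -/
abbrev Loc : Type := ℕ

/-- A list heap: finite partial map from locations to (next, data) pairs. -/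
abbrev ListHeap : Type := Finmap (fun _ : Loc => Loc × ℤ)

/-- Sorted list segment `lseg h E M F M'`. -/
inductive lseg : ListHeap → Loc → Multiset ℤ → Loc → Multiset ℤ → Prop
  | base (h : ListHeap) (E F : Loc) (M M' : Multiset ℤ) :
      E = F → M = M' → h = ∅ → lseg h E M F M'
  | ind (h : ListHeap) (E F : Loc) (M M' : Multiset ℤ)
      (X : Loc) (v : ℤ) (M₁ : Multiset ℤ) (h' : ListHeap) :
      (Finmap.singleton E (X, v)).Disjoint h' →
      h = Finmap.singleton E (X, v) ∪ h' →
      lseg h' X M₁ F M' →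
      (∀ m ∈ M₁, v ≤ m) →
      M = {v} + M₁ →
      lseg h E M F M'

/-- Composition lemma for sorted list segments. -/
theorem lseg_composition
    (h₁ h₂ : ListHeap) (hdisj : h₁.Disjoint h₂)
    (E₁ E₂ E₃ : Loc) (M₁ M₂ M₃ : Multiset ℤ)
    (H₁ : lseg h₁ E₁ M₁ E₂ M₂) (H₂ : lseg h₂ E₂ M₂ E₃ M₃) :
    lseg (h₁ ∪ h₂) E₁ M₁ E₃ M₃ := by
  induction H₁ with
  | base h E F M M' hE hM hh =>
    subst hE hM hh
    rw [Finmap.empty_union]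
    exact H₂
  | ind h E F M M' X v N h' hd hh _ hv hM ih =>
    subst hh
    rw [Finmap.disjoint_union_left] at hdisj
    refine lseg.ind _ E E₃ M M₃ X v N (h' ∪ h₂) ?_ ?_ (ih hdisj.2 H₂) hv hM
    · rw [Finmap.disjoint_union_right]
      exact ⟨hd, hdisj.1⟩
    · exact Finmap.union_assoc
end

section
/- Data-constrained composition lemma for three-parameter sorted list segments: for all list heaps h₁, h₂ with disjoint domains, locations E₁, E₂, E₃ and multisets of integers M₁, M₂, if lseg₃(h₁, E₁, M₁, E₂) and lseg₃(h₂, E₂, M₂, E₃) hold and M₁ ≤ M₂ (every element of M₁ is less than or equal to every element of M₂), then lseg₃(h₁ ∗ h₂, E₁, M₁ + M₂, E₃) holds. -/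
/-- Three-parameter sorted list segment `lseg₃ h E M F`. -/
inductive lseg₃ : ListHeap → Loc → Multiset ℤ → Loc → Prop
  | base (h : ListHeap) (E F : Loc) (M : Multiset ℤ) :
      E = F → M = ∅ → h = ∅ → lseg₃ h E M F
  | ind (h : ListHeap) (E F : Loc) (M : Multiset ℤ)
      (X : Loc) (v : ℤ) (M₁ : Multiset ℤ) (h' : ListHeap) :
      (Finmap.singleton E (X, v)).Disjoint h' →
      h = Finmap.singleton E (X, v) ∪ h' →
      lseg₃ h' X M₁ F →
      (∀ m ∈ M₁, v ≤ m) →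
      M = {v} + M₁ →
      lseg₃ h E M F

/-- Data-constrained composition lemma for three-parameter sorted list segments. -/
theorem lseg₃_composition
    (h₁ h₂ : ListHeap) (hdisj : h₁.Disjoint h₂)
    (E₁ E₂ E₃ : Loc) (M₁ M₂ : Multiset ℤ)
    (H₁ : lseg₃ h₁ E₁ M₁ E₂) (H₂ : lseg₃ h₂ E₂ M₂ E₃)
    (hle : ∀ m₁ ∈ M₁, ∀ m₂ ∈ M₂, m₁ ≤ m₂) :
    lseg₃ (h₁ ∪ h₂) E₁ (M₁ + M₂) E₃ := by
  induction H₁ with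
  | base h E F M hE hM hh =>
    subst hE hM hh
    simpa using H₂
  | ind h E F M X v M' h' hd hh H hv hM ih =>
    subst hh hM
    rw [Finmap.disjoint_union_left] at hdisj
    refine lseg₃.ind _ _ _ _ X v (M' + M₂) (h' ∪ h₂) ?_ ?_
      (ih hdisj.2 H₂ fun m hm => hle m (by simp [hm])) ?_ (add_assoc _ _ _)
    · rw [Finmap.disjoint_union_right]
      exact ⟨hd, hdisj.1⟩
    · exact Finmap.union_assoc
    · intro m hm
      rcases Multiset.mem_add.1 hm with hm | hm
      · exact hv m hm
      · exact hle v (by simp) m hm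
end

section
/- Composition lemma for binary search trees with one hole (instance of the theorem that syntactically compositional predicates are semantically compositional): for all tree heaps h₁, h₂ with disjoint domains, locations E₁, E₂, E₃ and multisets of integers M₁, M₂, M₃, if bsthole(h₁, E₁, M₁, E₂, M₂) and bsthole(h₂, E₂, M₂, E₃, M₃) hold, then bsthole(h₁ ∗ h₂, E₁, M₁, E₃, M₃) holds. -/
/-- A tree heap: finite partial map from locations to (left, right, data) triples. -/
abbrev TreeHeap : Type := Finmap (fun _ : Loc => Loc × Loc × ℤ)

/-- Binary search tree predicate `bst h E M`. -/
inductive bst : TreeHeap → Loc → Multiset ℤ → Prop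
  | base (h : TreeHeap) (E : Loc) (M : Multiset ℤ) :
      E = 0 → M = ∅ → h = ∅ → bst h E M
  | ind (h : TreeHeap) (E : Loc) (M : Multiset ℤ)
      (X Y : Loc) (v : ℤ) (M₁ M₂ : Multiset ℤ) (h₁ h₂ : TreeHeap) :
      (Finmap.singleton E (X, Y, v)).Disjoint h₁ →
      (Finmap.singleton E (X, Y, v)).Disjoint h₂ →
      h₁.Disjoint h₂ →
      h = Finmap.singleton E (X, Y, v) ∪ h₁ ∪ h₂ →
      bst h₁ X M₁ → bst h₂ Y M₂ →
      M = {v} + M₁ + M₂ →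
      (∀ m ∈ M₁, m < v) → (∀ m ∈ M₂, v < m) →
      bst h E M

/-- Binary search tree with one hole `bsthole h E M₁ F M₂`. -/
inductive bsthole : TreeHeap → Loc → Multiset ℤ → Loc → Multiset ℤ → Prop
  | base (h : TreeHeap) (E F : Loc) (M₁ M₂ : Multiset ℤ) :
      E = F → M₁ = M₂ → h = ∅ → bsthole h E M₁ F M₂
  | right (h : TreeHeap) (E F : Loc) (M₁ M₂ : Multiset ℤ)
      (X Y : Loc) (v : ℤ) (M₃ M₄ : Multiset ℤ) (h₁ h₂ : TreeHeap) :
      (Finmap.singleton E (X, Y, v)).Disjoint h₁ →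
      (Finmap.singleton E (X, Y, v)).Disjoint h₂ →
      h₁.Disjoint h₂ →
      h = Finmap.singleton E (X, Y, v) ∪ h₁ ∪ h₂ →
      bst h₁ X M₃ → bsthole h₂ Y M₄ F M₂ →
      M₁ = {v} + M₃ + M₄ →
      (∀ m ∈ M₃, m < v) → (∀ m ∈ M₄, v < m) →
      bsthole h E M₁ F M₂
  | left (h : TreeHeap) (E F : Loc) (M₁ M₂ : Multiset ℤ)
      (X Y : Loc) (v : ℤ) (M₃ M₄ : Multiset ℤ) (h₁ h₂ : TreeHeap) :
      (Finmap.singleton E (X, Y, v)).Disjoint h₁ →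
      (Finmap.singleton E (X, Y, v)).Disjoint h₂ →
      h₁.Disjoint h₂ →
      h = Finmap.singleton E (X, Y, v) ∪ h₁ ∪ h₂ →
      bsthole h₁ X M₃ F M₂ → bst h₂ Y M₄ →
      M₁ = {v} + M₃ + M₄ →
      (∀ m ∈ M₃, m < v) → (∀ m ∈ M₄, v < m) →
      bsthole h E M₁ F M₂

/-- Composition lemma for binary search trees with one hole. -/
theorem bsthole_composition
    (h₁ h₂ : TreeHeap) (hdisj : h₁.Disjoint h₂)
    (E₁ E₂ E₃ : Loc) (M₁ M₂ M₃ : Multiset ℤ)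
    (H₁ : bsthole h₁ E₁ M₁ E₂ M₂) (H₂ : bsthole h₂ E₂ M₂ E₃ M₃) :
    bsthole (h₁ ∪ h₂) E₁ M₁ E₃ M₃ := by
  induction H₁ with
  | base h E F M₁ M₂ hE hM hh =>
    subst hE hM hh
    rw [Finmap.empty_union]
    exact H₂
  | right h E F M₁ M₂ X Y v M₃ M₄ a b d1 d2 d3 hh hb _ hM hl hr ih =>
    subst hh
    rw [Finmap.disjoint_union_left, Finmap.disjoint_union_left] at hdisj
    obtain ⟨⟨e1, e2⟩, e3⟩ := hdisj
    refine bsthole.right _ _ _ _ _ X Y v M₃ M₄ a (b ∪ h₂) d1 ?_ ?_ ?_ hb (ih e3 H₂) hM hl hr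
    · exact (Finmap.disjoint_union_right _ _ _).2 ⟨d2, e1⟩
    · exact (Finmap.disjoint_union_right _ _ _).2 ⟨d3, e2⟩
    · rw [Finmap.union_assoc]
  | left h E F M₁ M₂ X Y v M₃ M₄ a b d1 d2 d3 hh _ hb hM hl hr ih =>
    subst hh
    rw [Finmap.disjoint_union_left, Finmap.disjoint_union_left] at hdisj
    obtain ⟨⟨e1, e2⟩, e3⟩ := hdisj
    refine bsthole.left _ _ _ _ _ X Y v M₃ M₄ (a ∪ h₂) b ?_ d2 ?_ ?_ (ih e2 H₂) hb hM hl hr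
    · exact (Finmap.disjoint_union_right _ _ _).2 ⟨d1, e1⟩
    · exact (Finmap.disjoint_union_left _ _ _).2 ⟨d3, Finmap.Disjoint.symm _ _ e3⟩
    · rw [Finmap.union_assoc (s₂ := b), Finmap.union_comm_of_disjoint e3,
        ← Finmap.union_assoc (s₂ := h₂) (s₃ := b), Finmap.union_assoc (s₂ := a) (s₃ := h₂)]
end

section
/- Completion equivalence for binary search trees (instance of the completion theorem): for every tree heap h, location E and multiset of integers M, bst(h, E, M) holds if and only if bsthole(h, E, M, nil, ∅) holds. -/
/-- Completion equivalence: `bst h E M` iff `bsthole h E M nil ∅`. -/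
theorem bst_iff_bsthole_nil
    (h : TreeHeap) (E : Loc) (M : Multiset ℤ) :
    bst h E M ↔ bsthole h E M 0 ∅ := by
  constructor
  · intro H
    induction H with
    | base h E M hE hM hh => exact bsthole.base h E 0 M ∅ hE hM hh
    | ind h E M X Y v M₁ M₂ h₁ h₂ d1 d2 d3 hh b1 b2 hM l1 l2 ih1 ih2 =>
      exact bsthole.right h E 0 M ∅ X Y v M₁ M₂ h₁ h₂ d1 d2 d3 hh b1 ih2 hM l1 l2
  · intro H
    generalize hF : (0 : Loc) = F at H
    generalize hN : (∅ : Multiset ℤ) = N at H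
    induction H with
    | base h E F M₁ M₂ hE hM hh =>
      subst hF hN
      exact bst.base h E M₁ hE hM hh
    | right h E F M₁ M₂ X Y v M₃ M₄ h₁ h₂ d1 d2 d3 hh b1 b2 hM l1 l2 ih =>
      exact bst.ind h E M₁ X Y v M₃ M₄ h₁ h₂ d1 d2 d3 hh b1 (ih hF hN) hM l1 l2
    | left h E F M₁ M₂ X Y v M₃ M₄ h₁ h₂ d1 d2 d3 hh b1 b2 hM l1 l2 ih =>
      exact bst.ind h E M₁ X Y v M₃ M₄ h₁ h₂ d1 d2 d3 hh (ih hF hN) b2 hM l1 l2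
end

section
/- Completion lemma for binary search trees with one hole: for all tree heaps h₁, h₂ with disjoint domains, locations E, F and multisets of integers M₁, M₂, if bsthole(h₁, E, M₁, F, M₂) and bst(h₂, F, M₂) hold, then bst(h₁ ∗ h₂, E, M₁) holds. -/
/-- Completion lemma for binary search trees with one hole. -/
theorem bsthole_bst_completion
    (h₁ h₂ : TreeHeap) (hdisj : h₁.Disjoint h₂)
    (E F : Loc) (M₁ M₂ : Multiset ℤ)
    (H₁ : bsthole h₁ E M₁ F M₂) (H₂ : bst h₂ F M₂) :
    bst (h₁ ∪ h₂) E M₁ := by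
  induction H₁ with
  | base h E F M₁ M₂ hE hM hh =>
    subst hE hM hh
    simpa using H₂
  | right h E F M₁ M₂ X Y v M₃ M₄ k₁ k₂ d1 d2 d3 hh hb _ hM hl hr ih =>
    subst hh
    rw [Finmap.disjoint_union_left, Finmap.disjoint_union_left] at hdisj
    obtain ⟨⟨e1, e2⟩, e3⟩ := hdisj
    refine bst.ind _ E M₁ X Y v M₃ M₄ k₁ (k₂ ∪ h₂) d1 ?_ ?_ ?_ hb (ih e3 H₂) hM hl hr
    · exact (Finmap.disjoint_union_right _ _ _).2 ⟨d2, e1⟩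
    · exact (Finmap.disjoint_union_right _ _ _).2 ⟨d3, e2⟩
    · simp only [Finmap.union_assoc]
  | left h E F M₁ M₂ X Y v M₃ M₄ k₁ k₂ d1 d2 d3 hh _ hb hM hl hr ih =>
    subst hh
    rw [Finmap.disjoint_union_left, Finmap.disjoint_union_left] at hdisj
    obtain ⟨⟨e1, e2⟩, e3⟩ := hdisj
    refine bst.ind _ E M₁ X Y v M₃ M₄ (k₁ ∪ h₂) k₂ ?_ d2 ?_ ?_ (ih e2 H₂) hb hM hl hr
    · exact (Finmap.disjoint_union_right _ _ _).2 ⟨d1, e1⟩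
    · exact (Finmap.disjoint_union_left _ _ _).2 ⟨d3, e3.symm⟩
    · simp only [Finmap.union_assoc]
      rw [Finmap.union_comm_of_disjoint e3]
end

section
/- Stronger lemma, second entailment (instance of the theorem on stronger predicates): for all tree heaps h₁, h₂ with disjoint domains, locations E₁, E₂, E₃ and multisets of integers M₁, M₂, M₃, if natbsth(h₁, E₁, M₁, E₂, M₂) and bsthole(h₂, E₂, M₂, E₃, M₃) hold, then bsthole(h₁ ∗ h₂, E₁, M₁, E₃, M₃) holds. -/
/-- `natbsth` : same rules as `bsthole` with the additional constraint `M₃ ≥ 0`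
added to the body of each inductive rule. -/
inductive natbsth : TreeHeap → Loc → Multiset ℤ → Loc → Multiset ℤ → Prop
  | base (h : TreeHeap) (E F : Loc) (M₁ M₂ : Multiset ℤ) :
      E = F → M₁ = M₂ → h = ∅ → natbsth h E M₁ F M₂
  | right (h : TreeHeap) (E F : Loc) (M₁ M₂ : Multiset ℤ)
      (X Y : Loc) (v : ℤ) (M₃ M₄ : Multiset ℤ) (h₁ h₂ : TreeHeap) :
      (Finmap.singleton E (X, Y, v)).Disjoint h₁ →
      (Finmap.singleton E (X, Y, v)).Disjoint h₂ →
      h₁.Disjoint h₂ →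
      h = Finmap.singleton E (X, Y, v) ∪ h₁ ∪ h₂ →
      bst h₁ X M₃ → natbsth h₂ Y M₄ F M₂ →
      M₁ = {v} + M₃ + M₄ →
      (∀ m ∈ M₃, m < v) → (∀ m ∈ M₄, v < m) →
      (∀ m ∈ M₃, (0 : ℤ) ≤ m) →
      natbsth h E M₁ F M₂
  | left (h : TreeHeap) (E F : Loc) (M₁ M₂ : Multiset ℤ)
      (X Y : Loc) (v : ℤ) (M₃ M₄ : Multiset ℤ) (h₁ h₂ : TreeHeap) :
      (Finmap.singleton E (X, Y, v)).Disjoint h₁ →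
      (Finmap.singleton E (X, Y, v)).Disjoint h₂ →
      h₁.Disjoint h₂ →
      h = Finmap.singleton E (X, Y, v) ∪ h₁ ∪ h₂ →
      natbsth h₁ X M₃ F M₂ → bst h₂ Y M₄ →
      M₁ = {v} + M₃ + M₄ →
      (∀ m ∈ M₃, m < v) → (∀ m ∈ M₄, v < m) →
      (∀ m ∈ M₃, (0 : ℤ) ≤ m) →
      natbsth h E M₁ F M₂

/-- Stronger lemma, second entailment. -/
theorem natbsth_bsthole_composition
    (h₁ h₂ : TreeHeap) (hdisj : h₁.Disjoint h₂)
    (E₁ E₂ E₃ : Loc) (M₁ M₂ M₃ : Multiset ℤ)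
    (H₁ : natbsth h₁ E₁ M₁ E₂ M₂) (H₂ : bsthole h₂ E₂ M₂ E₃ M₃) :
    bsthole (h₁ ∪ h₂) E₁ M₁ E₃ M₃ := by
  induction H₁ with
  | base h E F M M' hE hM hh =>
    subst hE hM hh
    simpa using H₂
  | right h E F M M' X Y v A B a b d1 d2 d3 hh hb hn ih_or hM hA hB =>
    rename_i ih
    subst hh
    rw [Finmap.disjoint_union_left, Finmap.disjoint_union_left] at hdisj
    obtain ⟨⟨k1, k2⟩, k3⟩ := hdisj
    exact bsthole.right _ E _ _ _ X Y v A B a (b ∪ h₂) d1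
      ((Finmap.disjoint_union_right _ _ _).2 ⟨d2, k1⟩)
      ((Finmap.disjoint_union_right _ _ _).2 ⟨d3, k2⟩)
      (Finmap.union_assoc) hb (ih k3 H₂) (by assumption) (by assumption) (by assumption)
  | left h E F M M' X Y v A B a b d1 d2 d3 hh hb hn ih_or hM hA hB =>
    rename_i ih
    subst hh
    rw [Finmap.disjoint_union_left, Finmap.disjoint_union_left] at hdisj
    obtain ⟨⟨k1, k2⟩, k3⟩ := hdisj
    refine bsthole.left _ E _ _ _ X Y v A B (a ∪ h₂) b
      ((Finmap.disjoint_union_right _ _ _).2 ⟨d1, k1⟩) d2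
      ((Finmap.disjoint_union_left _ _ _).2 ⟨d3, k3.symm⟩)
      ?_ (ih k2 H₂) (by assumption) (by assumption) (by assumption) (by assumption)
    rw [Finmap.union_assoc, Finmap.union_comm_of_disjoint k3, ← Finmap.union_assoc,
      Finmap.union_assoc (s₂ := a) (s₃ := h₂)]
end

section
/- Static-parameter contraction lemma (instance of the static-parameter contraction theorem): for all tail-tree heaps h₁, h₂ with disjoint domains, locations E₁, E₂, E₃ and multisets of integers M₁, M₂, M₃, if stabsth(h₁, E₁, M₁, E₂, M₂, E₃) and tailbsth(h₂, E₂, M₂, E₃, M₃) hold, then tailbsth(h₁ ∗ h₂, E₁, M₁, E₃, M₃) holds. -/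
/-- A tail-tree heap: finite partial map from locations to
(left, right, tail, data) quadruples. -/
abbrev TailTreeHeap : Type := Finmap (fun _ : Loc => Loc × Loc × Loc × ℤ)

/-- `tbst h E M B` : complete binary search tree rooted at `E`, all of whose
nodes have tail pointer `B`. -/
inductive tbst : TailTreeHeap → Loc → Multiset ℤ → Loc → Prop
  | base (h : TailTreeHeap) (E B : Loc) (M : Multiset ℤ) :
      E = 0 → M = ∅ → h = ∅ → tbst h E M B
  | ind (h : TailTreeHeap) (E B : Loc) (M : Multiset ℤ)
      (X Y : Loc) (v : ℤ) (M₁ M₂ : Multiset ℤ) (h₁ h₂ : TailTreeHeap) :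
      (Finmap.singleton E (X, Y, B, v)).Disjoint h₁ →
      (Finmap.singleton E (X, Y, B, v)).Disjoint h₂ →
      h₁.Disjoint h₂ →
      h = Finmap.singleton E (X, Y, B, v) ∪ h₁ ∪ h₂ →
      tbst h₁ X M₁ B → tbst h₂ Y M₂ B →
      M = {v} + M₁ + M₂ →
      (∀ m ∈ M₁, m < v) → (∀ m ∈ M₂, v < m) →
      tbst h E M B

/-- `stabsth h E M₁ F M₂ B` : binary search tree with one hole `F` in which
every node has the static tail pointer `B`. -/
inductive stabsth : TailTreeHeap → Loc → Multiset ℤ → Loc → Multiset ℤ → Loc → Prop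
  | base (h : TailTreeHeap) (E F B : Loc) (M₁ M₂ : Multiset ℤ) :
      E = F → M₁ = M₂ → h = ∅ → stabsth h E M₁ F M₂ B
  | right (h : TailTreeHeap) (E F B : Loc) (M₁ M₂ : Multiset ℤ)
      (X Y : Loc) (v : ℤ) (M₃ M₄ : Multiset ℤ) (h₁ h₂ : TailTreeHeap) :
      (Finmap.singleton E (X, Y, B, v)).Disjoint h₁ →
      (Finmap.singleton E (X, Y, B, v)).Disjoint h₂ →
      h₁.Disjoint h₂ →
      h = Finmap.singleton E (X, Y, B, v) ∪ h₁ ∪ h₂ →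
      tbst h₁ X M₃ B → stabsth h₂ Y M₄ F M₂ B →
      M₁ = {v} + M₃ + M₄ →
      (∀ m ∈ M₃, m < v) → (∀ m ∈ M₄, v < m) →
      stabsth h E M₁ F M₂ B
  | left (h : TailTreeHeap) (E F B : Loc) (M₁ M₂ : Multiset ℤ)
      (X Y : Loc) (v : ℤ) (M₃ M₄ : Multiset ℤ) (h₁ h₂ : TailTreeHeap) :
      (Finmap.singleton E (X, Y, B, v)).Disjoint h₁ →
      (Finmap.singleton E (X, Y, B, v)).Disjoint h₂ →
      h₁.Disjoint h₂ →
      h = Finmap.singleton E (X, Y, B, v) ∪ h₁ ∪ h₂ →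
      stabsth h₁ X M₃ F M₂ B → tbst h₂ Y M₄ B →
      M₁ = {v} + M₃ + M₄ →
      (∀ m ∈ M₃, m < v) → (∀ m ∈ M₄, v < m) →
      stabsth h E M₁ F M₂ B

/-- `tailbsth h E M₁ F M₂` : same rules as `stabsth` with the static parameter
`B` replaced everywhere by the hole parameter `F`. -/
inductive tailbsth : TailTreeHeap → Loc → Multiset ℤ → Loc → Multiset ℤ → Prop
  | base (h : TailTreeHeap) (E F : Loc) (M₁ M₂ : Multiset ℤ) :
      E = F → M₁ = M₂ → h = ∅ → tailbsth h E M₁ F M₂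
  | right (h : TailTreeHeap) (E F : Loc) (M₁ M₂ : Multiset ℤ)
      (X Y : Loc) (v : ℤ) (M₃ M₄ : Multiset ℤ) (h₁ h₂ : TailTreeHeap) :
      (Finmap.singleton E (X, Y, F, v)).Disjoint h₁ →
      (Finmap.singleton E (X, Y, F, v)).Disjoint h₂ →
      h₁.Disjoint h₂ →
      h = Finmap.singleton E (X, Y, F, v) ∪ h₁ ∪ h₂ →
      tbst h₁ X M₃ F → tailbsth h₂ Y M₄ F M₂ →
      M₁ = {v} + M₃ + M₄ →
      (∀ m ∈ M₃, m < v) → (∀ m ∈ M₄, v < m) →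
      tailbsth h E M₁ F M₂
  | left (h : TailTreeHeap) (E F : Loc) (M₁ M₂ : Multiset ℤ)
      (X Y : Loc) (v : ℤ) (M₃ M₄ : Multiset ℤ) (h₁ h₂ : TailTreeHeap) :
      (Finmap.singleton E (X, Y, F, v)).Disjoint h₁ →
      (Finmap.singleton E (X, Y, F, v)).Disjoint h₂ →
      h₁.Disjoint h₂ →
      h = Finmap.singleton E (X, Y, F, v) ∪ h₁ ∪ h₂ →
      tailbsth h₁ X M₃ F M₂ → tbst h₂ Y M₄ F →
      M₁ = {v} + M₃ + M₄ →
      (∀ m ∈ M₃, m < v) → (∀ m ∈ M₄, v < m) →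
      tailbsth h E M₁ F M₂

/-- Static-parameter contraction lemma. -/
theorem stabsth_tailbsth_composition
    (h₁ h₂ : TailTreeHeap) (hdisj : h₁.Disjoint h₂)
    (E₁ E₂ E₃ : Loc) (M₁ M₂ M₃ : Multiset ℤ)
    (H₁ : stabsth h₁ E₁ M₁ E₂ M₂ E₃) (H₂ : tailbsth h₂ E₂ M₂ E₃ M₃) :
    tailbsth (h₁ ∪ h₂) E₁ M₁ E₃ M₃ := by
  induction H₁ generalizing h₂ with
  | base h E F B M₁ M₂ hE hM hh =>
    subst hE hM hh
    rw [Finmap.empty_union]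
    exact H₂
  | right h E F B M₁ M₂ X Y v M₃ M₄ k₁ k₂ d1 d2 d3 hh ht hs hM hl hr ih =>
    subst hh
    rw [Finmap.disjoint_union_left, Finmap.disjoint_union_left] at hdisj
    obtain ⟨⟨a, b⟩, c⟩ := hdisj
    refine tailbsth.right _ E B M₁ _ X Y v M₃ M₄ k₁ (k₂ ∪ h₂) d1 ?_ ?_ ?_ ht
      (ih h₂ c H₂) hM hl hr
    · exact (Finmap.disjoint_union_right _ _ _).2 ⟨d2, a⟩
    · exact (Finmap.disjoint_union_right _ _ _).2 ⟨d3, b⟩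
    · rw [Finmap.union_assoc]
  | left h E F B M₁ M₂ X Y v M₃ M₄ k₁ k₂ d1 d2 d3 hh hs ht hM hl hr ih =>
    subst hh
    rw [Finmap.disjoint_union_left, Finmap.disjoint_union_left] at hdisj
    obtain ⟨⟨a, b⟩, c⟩ := hdisj
    refine tailbsth.left _ E B M₁ _ X Y v M₃ M₄ (k₁ ∪ h₂) k₂ ?_ d2 ?_ ?_
      (ih h₂ b H₂) ht hM hl hr
    · exact (Finmap.disjoint_union_right _ _ _).2 ⟨d1, a⟩
    · exact (Finmap.disjoint_union_left _ _ _).2 ⟨d3, Finmap.Disjoint.symm _ _ c⟩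
    · rw [Finmap.union_assoc, Finmap.union_comm_of_disjoint c, ← Finmap.union_assoc,
        ← Finmap.union_assoc]
end

section
/- Pseudo-composition lemma for neqbsthole: for all tree heaps h₁, h₂, h₃ with pairwise disjoint domains, locations E₁, E₂, E₃, X, Y, integer v, and multisets of integers M₁, M₂, M₃, if neqbsthole(h₁, E₁, M₁, E₂, M₂), neqbsthole(h₂, E₂, M₂, E₃, M₃), and h₃ = {E₃ ↦ (X, Y, v)}, then neqbsthole(h₁ ∗ h₂, E₁, M₁, E₃, M₃) holds (so the composed formula with the frame E₃ ↦ (X, Y, v) entails neqbsthole(E₁, M₁, E₃, M₃) separately conjoined with that frame). -/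
/-- `neqbsthole` : same rules as `bsthole` with the additional constraint `E ≠ F`
added to the body of each inductive rule. -/
inductive neqbsthole : TreeHeap → Loc → Multiset ℤ → Loc → Multiset ℤ → Prop
  | base (h : TreeHeap) (E F : Loc) (M₁ M₂ : Multiset ℤ) :
      E = F → M₁ = M₂ → h = ∅ → neqbsthole h E M₁ F M₂
  | right (h : TreeHeap) (E F : Loc) (M₁ M₂ : Multiset ℤ)
      (X Y : Loc) (v : ℤ) (M₃ M₄ : Multiset ℤ) (h₁ h₂ : TreeHeap) :
      (Finmap.singleton E (X, Y, v)).Disjoint h₁ →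
      (Finmap.singleton E (X, Y, v)).Disjoint h₂ →
      h₁.Disjoint h₂ →
      h = Finmap.singleton E (X, Y, v) ∪ h₁ ∪ h₂ →
      bst h₁ X M₃ → neqbsthole h₂ Y M₄ F M₂ →
      M₁ = {v} + M₃ + M₄ →
      (∀ m ∈ M₃, m < v) → (∀ m ∈ M₄, v < m) →
      E ≠ F →
      neqbsthole h E M₁ F M₂
  | left (h : TreeHeap) (E F : Loc) (M₁ M₂ : Multiset ℤ)
      (X Y : Loc) (v : ℤ) (M₃ M₄ : Multiset ℤ) (h₁ h₂ : TreeHeap) :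
      (Finmap.singleton E (X, Y, v)).Disjoint h₁ →
      (Finmap.singleton E (X, Y, v)).Disjoint h₂ →
      h₁.Disjoint h₂ →
      h = Finmap.singleton E (X, Y, v) ∪ h₁ ∪ h₂ →
      neqbsthole h₁ X M₃ F M₂ → bst h₂ Y M₄ →
      M₁ = {v} + M₃ + M₄ →
      (∀ m ∈ M₃, m < v) → (∀ m ∈ M₄, v < m) →
      E ≠ F →
      neqbsthole h E M₁ F M₂

theorem neqbsthole_comp_aux {h₁ : TreeHeap} {E₁ E₂ : Loc} {M₁ M₂ : Multiset ℤ}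
    (H₁ : neqbsthole h₁ E₁ M₁ E₂ M₂) (h₂ : TreeHeap) (E₃ : Loc) (M₃ : Multiset ℤ)
    (H₂ : neqbsthole h₂ E₂ M₂ E₃ M₃) (hd : ∀ x ∈ h₁, x ∉ h₂) (hE : E₃ ∉ h₁) :
    neqbsthole (h₁ ∪ h₂) E₁ M₁ E₃ M₃ := by
  induction H₁ with
  | base h E F M₁ M₂ e1 e2 e3 =>
    subst e1 e2 e3
    simpa using H₂
  | right h E F M₁ M₂ X Y v M₃' M₄ a b d1 d2 d3 e hb hn eM l1 l2 ne ih =>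
    subst e
    simp only [Finmap.mem_union, not_or] at hd hE
    refine neqbsthole.right _ E E₃ M₁ M₃ X Y v M₃' M₄ a (b ∪ h₂) d1 ?_ ?_ ?_ hb
      (ih H₂ (fun x hx => hd x (Or.inr hx)) hE.2) eM l1 l2 ?_
    · intro x hx hx'
      rcases Finmap.mem_union.1 hx' with h | h
      · exact d2 x hx h
      · exact hd x (Or.inl (Or.inl hx)) h
    · intro x hx hx'
      rcases Finmap.mem_union.1 hx' with h | h
      · exact d3 x hx h
      · exact hd x (Or.inl (Or.inr hx)) h
    · rw [Finmap.union_assoc]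
    · rintro rfl
      exact hE.1.1 (by simp)
  | left h E F M₁ M₂ X Y v M₃' M₄ a b d1 d2 d3 e hn hb eM l1 l2 ne ih =>
    subst e
    simp only [Finmap.mem_union, not_or] at hd hE
    refine neqbsthole.left _ E E₃ M₁ M₃ X Y v M₃' M₄ (a ∪ h₂) b ?_ d2 ?_ ?_
      (ih H₂ (fun x hx => hd x (Or.inl (Or.inr hx))) hE.1.2) hb eM l1 l2 ?_
    · intro x hx hx'
      rcases Finmap.mem_union.1 hx' with h | h
      · exact d1 x hx h
      · exact hd x (Or.inl (Or.inl hx)) h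
    · intro x hx hx'
      rcases Finmap.mem_union.1 hx with h | h
      · exact d3 x h hx'
      · exact hd x (Or.inr hx') h
    · have hc : b ∪ h₂ = h₂ ∪ b :=
        Finmap.union_comm_of_disjoint (fun x hx => hd x (Or.inr hx))
      simp only [Finmap.union_assoc, hc]
    · rintro rfl
      exact hE.1.1 (by simp)

/-- Pseudo-composition lemma for `neqbsthole`. -/
theorem neqbsthole_pseudo_composition
    (h₁ h₂ h₃ : TreeHeap)
    (hd₁₂ : h₁.Disjoint h₂) (hd₁₃ : h₁.Disjoint h₃) (hd₂₃ : h₂.Disjoint h₃)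
    (E₁ E₂ E₃ X Y : Loc) (v : ℤ) (M₁ M₂ M₃ : Multiset ℤ)
    (H₁ : neqbsthole h₁ E₁ M₁ E₂ M₂) (H₂ : neqbsthole h₂ E₂ M₂ E₃ M₃)
    (H₃ : h₃ = Finmap.singleton E₃ (X, Y, v)) :
    neqbsthole (h₁ ∪ h₂) E₁ M₁ E₃ M₃ := by
  subst H₃
  exact neqbsthole_comp_aux H₁ h₂ E₃ M₃ H₂ hd₁₂ (fun h => hd₁₃ E₃ h (by simp))
end

section
/- Composition lemma for binary search trees with parent pointers and one hole: for all parent-tree heaps h₁, h₂ with disjoint domains, locations E₁, E₂, E₃, Pr₁, Pr₂, Pr₃ and multisets of integers M₁, M₂, M₃, if prtbsthole(h₁, E₁, Pr₁, M₁, E₂, Pr₂, M₂) and prtbsthole(h₂, E₂, Pr₂, M₂, E₃, Pr₃, M₃) hold, then prtbsthole(h₁ ∗ h₂, E₁, Pr₁, M₁, E₃, Pr₃, M₃) holds. -/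
/-- A parent-tree heap: finite partial map from locations to
(left, right, parent, data) quadruples. -/
abbrev PTreeHeap : Type := Finmap (fun _ : Loc => Loc × Loc × Loc × ℤ)

/-- `prtbst h E Pr M` : binary search tree with parent pointers, rooted at `E`
with parent `Pr`. -/
inductive prtbst : PTreeHeap → Loc → Loc → Multiset ℤ → Prop
  | base (h : PTreeHeap) (E Pr : Loc) (M : Multiset ℤ) :
      E = 0 → M = ∅ → h = ∅ → prtbst h E Pr M
  | ind (h : PTreeHeap) (E Pr : Loc) (M : Multiset ℤ)
      (X Y : Loc) (v : ℤ) (M₁ M₂ : Multiset ℤ) (h₁ h₂ : PTreeHeap) :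
      (Finmap.singleton E (X, Y, Pr, v)).Disjoint h₁ →
      (Finmap.singleton E (X, Y, Pr, v)).Disjoint h₂ →
      h₁.Disjoint h₂ →
      h = Finmap.singleton E (X, Y, Pr, v) ∪ h₁ ∪ h₂ →
      prtbst h₁ X E M₁ → prtbst h₂ Y E M₂ →
      M = {v} + M₁ + M₂ →
      (∀ m ∈ M₁, m < v) → (∀ m ∈ M₂, v < m) →
      prtbst h E Pr M

/-- `prtbsthole h E Pr₁ M₁ F Pr₂ M₂` : binary search tree with parent pointers
and one hole `F` with parent `Pr₂`. -/
inductive prtbsthole :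
    PTreeHeap → Loc → Loc → Multiset ℤ → Loc → Loc → Multiset ℤ → Prop
  | base (h : PTreeHeap) (E F Pr₁ Pr₂ : Loc) (M₁ M₂ : Multiset ℤ) :
      E = F → Pr₁ = Pr₂ → M₁ = M₂ → h = ∅ → prtbsthole h E Pr₁ M₁ F Pr₂ M₂
  | right (h : PTreeHeap) (E F Pr₁ Pr₂ : Loc) (M₁ M₂ : Multiset ℤ)
      (X Y : Loc) (v : ℤ) (M₃ M₄ : Multiset ℤ) (h₁ h₂ : PTreeHeap) :
      (Finmap.singleton E (X, Y, Pr₁, v)).Disjoint h₁ →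
      (Finmap.singleton E (X, Y, Pr₁, v)).Disjoint h₂ →
      h₁.Disjoint h₂ →
      h = Finmap.singleton E (X, Y, Pr₁, v) ∪ h₁ ∪ h₂ →
      prtbst h₁ X E M₃ → prtbsthole h₂ Y E M₄ F Pr₂ M₂ →
      M₁ = {v} + M₃ + M₄ →
      (∀ m ∈ M₃, m < v) → (∀ m ∈ M₄, v < m) →
      prtbsthole h E Pr₁ M₁ F Pr₂ M₂
  | left (h : PTreeHeap) (E F Pr₁ Pr₂ : Loc) (M₁ M₂ : Multiset ℤ)
      (X Y : Loc) (v : ℤ) (M₃ M₄ : Multiset ℤ) (h₁ h₂ : PTreeHeap) :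
      (Finmap.singleton E (X, Y, Pr₁, v)).Disjoint h₁ →
      (Finmap.singleton E (X, Y, Pr₁, v)).Disjoint h₂ →
      h₁.Disjoint h₂ →
      h = Finmap.singleton E (X, Y, Pr₁, v) ∪ h₁ ∪ h₂ →
      prtbsthole h₁ X E M₃ F Pr₂ M₂ → prtbst h₂ Y E M₄ →
      M₁ = {v} + M₃ + M₄ →
      (∀ m ∈ M₃, m < v) → (∀ m ∈ M₄, v < m) →
      prtbsthole h E Pr₁ M₁ F Pr₂ M₂

/-- Composition lemma for binary search trees with parent pointers and one hole. -/
theorem prtbsthole_composition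
    (h₁ h₂ : PTreeHeap) (hdisj : h₁.Disjoint h₂)
    (E₁ E₂ E₃ Pr₁ Pr₂ Pr₃ : Loc) (M₁ M₂ M₃ : Multiset ℤ)
    (H₁ : prtbsthole h₁ E₁ Pr₁ M₁ E₂ Pr₂ M₂)
    (H₂ : prtbsthole h₂ E₂ Pr₂ M₂ E₃ Pr₃ M₃) :
    prtbsthole (h₁ ∪ h₂) E₁ Pr₁ M₁ E₃ Pr₃ M₃ := by
  induction H₁ with
  | base h E F Pr₁ Pr₂ M₁ M₂ hE hP hM hh =>
    subst hE hP hM hh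
    simpa using H₂
  | right h E F Pr₁ Pr₂ M₁ M₂ X Y v M₃ M₄ k₁ k₂ d1 d2 d3 hh ht _ hM hl hr ih =>
    subst hh
    rw [Finmap.disjoint_union_left, Finmap.disjoint_union_left] at hdisj
    obtain ⟨⟨e1, e2⟩, e3⟩ := hdisj
    refine prtbsthole.right _ E _ Pr₁ _ M₁ _ X Y v M₃ M₄ k₁ (k₂ ∪ h₂) d1 ?_ ?_ ?_ ht
      (ih e3 H₂) hM hl hr
    · exact (Finmap.disjoint_union_right _ _ _).2 ⟨d2, e1⟩
    · exact (Finmap.disjoint_union_right _ _ _).2 ⟨d3, e2⟩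
    · rw [Finmap.union_assoc]
  | left h E F Pr₁ Pr₂ M₁ M₂ X Y v M₃ M₄ k₁ k₂ d1 d2 d3 hh _ ht hM hl hr ih =>
    subst hh
    rw [Finmap.disjoint_union_left, Finmap.disjoint_union_left] at hdisj
    obtain ⟨⟨e1, e2⟩, e3⟩ := hdisj
    refine prtbsthole.left _ E _ Pr₁ _ M₁ _ X Y v M₃ M₄ (k₁ ∪ h₂) k₂ ?_ d2 ?_ ?_
      (ih e2 H₂) ht hM hl hr
    · exact (Finmap.disjoint_union_right _ _ _).2 ⟨d1, e1⟩
    · exact (Finmap.disjoint_union_left _ _ _).2 ⟨d3, Finmap.Disjoint.symm _ _ e3⟩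
    · rw [Finmap.union_assoc, Finmap.union_comm_of_disjoint e3, ← Finmap.union_assoc,
        Finmap.union_assoc (s₁ := Finmap.singleton _ _) (s₂ := k₁) (s₃ := h₂)]
end

section
/- A list segment of odd length is a points-to cell followed by a list segment of even length: for every shape heap h and locations E, F, lsegodd(h, E, F) holds if and only if there exist a location X and a heap h' with h = {E ↦ X} ∗ h' and lsegeven(h', X, F). -/
/-- A shape heap: finite partial map from locations to locations (next pointer). -/
abbrev ShapeHeap : Type := Finmap (fun _ : Loc => Loc)

/-- `lsegeven h E F` : list segment of even length. -/
inductive lsegeven : ShapeHeap → Loc → Loc → Prop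
  | base (h : ShapeHeap) (E F : Loc) : E = F → h = ∅ → lsegeven h E F
  | ind (h : ShapeHeap) (E F X Y : Loc) (h' : ShapeHeap) :
      (Finmap.singleton E X : ShapeHeap).Disjoint (Finmap.singleton X Y : ShapeHeap) →
      (Finmap.singleton E X : ShapeHeap).Disjoint h' →
      (Finmap.singleton X Y : ShapeHeap).Disjoint h' →
      h = Finmap.singleton E X ∪ Finmap.singleton X Y ∪ h' →
      lsegeven h' Y F →
      lsegeven h E F

/-- `lsegodd h E F` : list segment of odd length. -/
inductive lsegodd : ShapeHeap → Loc → Loc → Prop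
  | base (h : ShapeHeap) (E F : Loc) : h = Finmap.singleton E F → lsegodd h E F
  | ind (h : ShapeHeap) (E F X Y : Loc) (h' : ShapeHeap) :
      (Finmap.singleton E X : ShapeHeap).Disjoint (Finmap.singleton X Y) →
      (Finmap.singleton E X : ShapeHeap).Disjoint h' →
      (Finmap.singleton X Y : ShapeHeap).Disjoint h' →
      h = Finmap.singleton E X ∪ Finmap.singleton X Y ∪ h' →
      lsegodd h' Y F →
      lsegodd h E F

/-- A list segment of odd length is a points-to cell followed by a list
segment of even length. -/
theorem lsegodd_iff_cell_lsegeven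
    (h : ShapeHeap) (E F : Loc) :
    lsegodd h E F ↔
      ∃ (X : Loc) (h' : ShapeHeap),
        (Finmap.singleton E X : ShapeHeap).Disjoint h' ∧
        h = Finmap.singleton E X ∪ h' ∧
        lsegeven h' X F := by
  constructor
  · intro H
    induction H with
    | base h E F e =>
      subst e
      refine ⟨F, ∅, ?_, by simp, .base _ _ _ rfl rfl⟩
      intro x _ hx
      exact Finmap.notMem_empty hx
    | ind h E F X Y h' d1 d2 d3 e _ ih =>
      obtain ⟨Z, k, d, rfl, hk⟩ := ih
      rw [Finmap.disjoint_union_right] at d2 d3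
      refine ⟨X, Finmap.singleton X Y ∪ Finmap.singleton Y Z ∪ k, ?_, ?_,
        .ind _ _ _ Y Z k d3.1 d3.2 d rfl hk⟩
      · rw [Finmap.disjoint_union_right, Finmap.disjoint_union_right]
        exact ⟨⟨d1, d2.1⟩, d2.2⟩
      · rw [e]; simp only [Finmap.union_assoc]
  · rintro ⟨X, h', d, e, H⟩
    induction H generalizing h E with
    | base k A B e1 e2 =>
      subst e1 e2
      exact .base _ _ _ (by simpa using e)
    | ind k A B X Y k' d1 d2 d3 e' _ ih =>
      subst e'
      rw [Finmap.disjoint_union_right, Finmap.disjoint_union_right] at d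
      refine .ind _ _ _ A X (Finmap.singleton X Y ∪ k') d.1.1 ?_ ?_ ?_ (ih _ _ d3 rfl)
      · rw [Finmap.disjoint_union_right]; exact ⟨d.1.2, d.2⟩
      · rw [Finmap.disjoint_union_right]; exact ⟨d1, d2⟩
      · rw [e]; simp only [Finmap.union_assoc]
end

section
/- Composition lemma for list segments of even length (instance of the theorem that syntactically compositional predicates are semantically compositional): for all shape heaps h₁, h₂ with disjoint domains and locations E, F, G, if lsegeven(h₁, E, F) and lsegeven(h₂, F, G) hold, then lsegeven(h₁ ∗ h₂, E, G) holds. -/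
/-- Composition lemma for list segments of even length. -/
theorem lsegeven_composition
    (h₁ h₂ : ShapeHeap) (hdisj : h₁.Disjoint h₂)
    (E F G : Loc)
    (H₁ : lsegeven h₁ E F) (H₂ : lsegeven h₂ F G) :
    lsegeven (h₁ ∪ h₂) E G := by
  induction H₁ with
  | base h E F hEF hh =>
    subst hEF hh
    rw [Finmap.empty_union]
    exact H₂
  | ind h E F X Y h' d1 d2 d3 hh _ ih =>
    subst hh
    rw [Finmap.disjoint_union_left, Finmap.disjoint_union_left] at hdisj
    obtain ⟨⟨a, b⟩, c⟩ := hdisj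
    refine lsegeven.ind _ E G X Y (h' ∪ h₂) d1 ?_ ?_ ?_ (ih c H₂)
    · rw [Finmap.disjoint_union_right]
      exact ⟨d2, a⟩
    · rw [Finmap.disjoint_union_right]
      exact ⟨d3, b⟩
    · rw [Finmap.union_assoc]
end

section
/- The multiset parameter of a binary search tree equals the multiset of stored values: for every tree heap h, location E and multiset of integers M, if bst(h, E, M) holds then M = values(h), where values(h) is the multiset of data values stored in h. -/
/-- The multiset of data values stored in a tree heap. -/
def values (h : TreeHeap) : Multiset ℤ :=
  h.entries.map (fun p => p.2.2.2)

theorem kunion_eq_append_aux (l₁ : List (Sigma (fun _ : Loc => Loc × Loc × ℤ))) :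
    ∀ l₂ : List (Sigma (fun _ : Loc => Loc × Loc × ℤ)),
      (∀ k ∈ l₁.keys, k ∉ l₂.keys) → List.kunion l₁ l₂ = l₁ ++ l₂ := by
  induction l₁ with
  | nil => intro l₂ _; simp
  | cons s l ih =>
    intro l₂ hd
    have h1 : s.1 ∉ l₂.keys := hd _ (by simp)
    rw [List.kunion_cons, List.kerase_of_notMem_keys h1, ih l₂]
    · rfl
    · intro k hk
      exact hd k (by simp [hk])

theorem values_union_aux (a b : TreeHeap) (hd : a.Disjoint b) :
    values (a ∪ b) = values a + values b := by
  revert hd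
  refine Finmap.induction_on₂ a b ?_
  intro a b hd
  have hk : List.kunion a.entries b.entries = a.entries ++ b.entries :=
    kunion_eq_append_aux _ _ (fun k h1 h2 => hd k h1 h2)
  rw [Finmap.union_toFinmap]
  change Multiset.map _ (Multiset.ofList (List.kunion a.entries b.entries)) =
    Multiset.map _ (Multiset.ofList a.entries) + Multiset.map _ (Multiset.ofList b.entries)
  rw [hk, ← Multiset.coe_add, Multiset.map_add]

/-- The multiset parameter of a binary search tree equals the stored values. -/
theorem bst_values
    (h : TreeHeap) (E : Loc) (M : Multiset ℤ)
    (H : bst h E M) :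
    M = values h := by
  induction H with
  | base h E M _ hM hh => subst hM; subst hh; rfl
  | ind h E M X Y v M₁ M₂ h₁ h₂ d1 d2 d3 hh _ _ hM _ _ ih1 ih2 =>
    subst hh
    rw [values_union_aux _ _ ((Finmap.disjoint_union_left _ _ _).2 ⟨d2, d3⟩),
      values_union_aux _ _ d1, hM, ih1, ih2]
    rfl
end

section
/- The first multiset parameter of a binary search tree with one hole is the union of the hole multiset with the stored values: for every tree heap h, locations E, F and multisets of integers M₁, M₂, if bsthole(h, E, M₁, F, M₂) holds then M₁ = M₂ + values(h), where values(h) is the multiset of data values stored in h. -/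
theorem kunion_of_disj (l₁ l₂ : List (Sigma (fun _ : Loc => Loc × Loc × ℤ)))
    (hd : ∀ x ∈ l₁.keys, x ∉ l₂.keys) : List.kunion l₁ l₂ = l₁ ++ l₂ := by
  induction l₁ with
  | nil => simp
  | cons s l ih =>
    rw [List.kunion_cons, List.kerase_of_notMem_keys (hd _ (by simp)),
      ih (fun x hx => hd x (by simp [hx]))]
    rfl

theorem values_union (h₁ h₂ : TreeHeap) (hd : h₁.Disjoint h₂) :
    values (h₁ ∪ h₂) = values h₁ + values h₂ := by
  revert hd
  refine Finmap.induction_on₂ h₁ h₂ fun a b hd => ?_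
  have hk : List.kunion a.entries b.entries = a.entries ++ b.entries :=
    kunion_of_disj _ _ (fun x hx hx' => hd x hx hx')
  rw [Finmap.union_toFinmap]
  simp only [values, AList.toFinmap_entries, AList.union_entries, hk]
  simp

theorem values_node (E X Y : Loc) (v : ℤ) (h₁ h₂ : TreeHeap)
    (d₁ : (Finmap.singleton E (X, Y, v)).Disjoint h₁)
    (d₂ : (Finmap.singleton E (X, Y, v)).Disjoint h₂) (d : h₁.Disjoint h₂) :
    values (Finmap.singleton E (X, Y, v) ∪ h₁ ∪ h₂) = {v} + values h₁ + values h₂ := by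
  rw [values_union _ _ ((Finmap.disjoint_union_left _ _ _).2 ⟨d₂, d⟩), values_union _ _ d₁]
  rfl

/-- The first multiset parameter of a binary search tree with one hole is the
union of the hole multiset with the stored values. -/
theorem bsthole_values
    (h : TreeHeap) (E F : Loc) (M₁ M₂ : Multiset ℤ)
    (H : bsthole h E M₁ F M₂) :
    M₁ = M₂ + values h := by
  induction H with
  | base h E F M₁ M₂ hE hM hh =>
    subst hM hh
    exact (add_zero _).symm
  | right h E F M₁ M₂ X Y v M₃ M₄ h₁ h₂ d₁ d₂ d hh hb _ hM _ _ ih =>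
    rw [hh, values_node _ _ _ _ _ _ d₁ d₂ d, hM, ih, bst_values _ _ _ hb]
    abel
  | left h E F M₁ M₂ X Y v M₃ M₄ h₁ h₂ d₁ d₂ d hh _ hb hM _ _ ih =>
    rw [hh, values_node _ _ _ _ _ _ d₁ d₂ d, hM, ih, bst_values _ _ _ hb]
    abel
end

section
/- Relaxed stronger lemma relating even-length list segments to list segments, second entailment: for all shape heaps h₁, h₂ with disjoint domains and locations E, F, G, if lsegeven(h₁, E, F) and ls(h₂, F, G) hold, then ls(h₁ ∗ h₂, E, G) holds. -/
/-- `ls h E F` : classic list segment. -/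
inductive ls : ShapeHeap → Loc → Loc → Prop
  | base (h : ShapeHeap) (E F : Loc) : E = F → h = ∅ → ls h E F
  | ind (h : ShapeHeap) (E F X : Loc) (h' : ShapeHeap) :
      (Finmap.singleton E X : ShapeHeap).Disjoint h' →
      h = Finmap.singleton E X ∪ h' →
      ls h' X F →
      ls h E F

/-- Relaxed stronger lemma, second entailment. -/
theorem lsegeven_ls_composition
    (h₁ h₂ : ShapeHeap) (hdisj : h₁.Disjoint h₂)
    (E F G : Loc)
    (H₁ : lsegeven h₁ E F) (H₂ : ls h₂ F G) :
    ls (h₁ ∪ h₂) E G := by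
  induction H₁ with
  | base h E F hEF hh =>
    subst hEF hh
    rw [Finmap.empty_union]
    exact H₂
  | ind h E F X Y h' d1 d2 d3 hh _ ih =>
    subst hh
    rw [Finmap.disjoint_union_left, Finmap.disjoint_union_left] at hdisj
    obtain ⟨⟨e1, e2⟩, e3⟩ := hdisj
    refine ls.ind _ E G X (Finmap.singleton X Y ∪ (h' ∪ h₂)) ?_ ?_ ?_
    · rw [Finmap.disjoint_union_right, Finmap.disjoint_union_right]
      exact ⟨d1, d2, e1⟩
    · rw [Finmap.union_assoc, Finmap.union_assoc]
    · refine ls.ind _ X G Y (h' ∪ h₂) ?_ rfl (ih e3 H₂)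
      rw [Finmap.disjoint_union_right]
      exact ⟨d3, e2⟩
end
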